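/- Let A = (a_{ij}) ∈ ℝ^{N×N} be a nonzero skew-symmetric matrix, a := max_{i,j} |a_{ij}|, and t > 0. Let x_{ij}, 1 ≤ i < j ≤ N, be independent standard Gaussians, x_{ji} := x_{ij}, Y_A := (a_{ij} x_{ij}), and define log Φ̃(t,A) := E log det(√t I_N + Y_A). Then (1/N) log Φ̃(t,A) ≤ (1/N) log Φ(t,A) ≤ (1/N) log Φ̃(t,A) + (1/N) log( 1 + √(8N) a e^{a²N/(2t)} / √(πt) ), where Φ(t,A) is the weighted matching polynomial (times √t if N is odd). -/

import Mathlib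

/-!
Write `D = det (√t I + Y_A)` and `L² = a² N / (2t)`.

In the Leibniz expansion of `D`, a permutation that is not an involution uses some Gaussian exactly
once, so its term has mean zero. Involutions correspond to matchings: a fixed point contributes `√t`
and an exchanged pair `{i, j}` contributes `a_{ij}²` in the mean, the sign cancelling against
skew-symmetry. So `E D` is the matching polynomial, and the lower bound is Jensen's inequality.

For the upper bound, the derivative of `log D` in a skew-symmetric direction `H` is
`tr ((√t I + Y_A)⁻¹ H)`. The inverse is an affine function of the orthogonal Cayley transform of
`Y_A` and `H` is trace-free, so Cauchy–Schwarz makes `log D` Lipschitz with constant `L`. By the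
Prékopa–Leindler inequality the standard Gaussian measure has Maurey's property (τ) with cost
`|x - y|² / 4`, and this property tensorizes. Since `L r ≤ L² + r² / 4`, it yields
`E D * E (1 / D) ≤ exp L²`, and Jensen's inequality for `1 / D` turns this into
`log E D ≤ E log D + L²`. Finally `L² ≤ log (1 + c exp L²)` for the constant `c = √(8N) a / √(πt)`,
because `c² = (16 / π) L² ≥ L²`.
-/

open MeasureTheory ProbabilityTheory Matrix

/-- Total weighted `k`-matching of the weighted graph encoded by the
skew-symmetric matrix `A`. -/
noncomputable def phiW {N : ℕ} (A : Matrix (Fin N) (Fin N) ℝ) (k : ℕ) : ℝ :=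
  ∑ M ∈ Finset.univ.filter
      (fun M : Finset (Fin N × Fin N) =>
        ((∀ p ∈ M, p.1 < p.2) ∧
          ∀ p ∈ M, ∀ q ∈ M, p ≠ q →
            p.1 ≠ q.1 ∧ p.1 ≠ q.2 ∧ p.2 ≠ q.1 ∧ p.2 ≠ q.2) ∧ M.card = k),
    ∏ p ∈ M, (A p.1 p.2) ^ 2

/-- The weighted matching polynomial `Φ(t, A)`. -/
noncomputable def PhiW {N : ℕ} (A : Matrix (Fin N) (Fin N) ℝ) (t : ℝ) : ℝ :=
  ∑ k ∈ Finset.range (N / 2 + 1), phiW A k * t ^ (N / 2 - k)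

/-- `Φ(t,A)`, multiplied by `√t` when `N` is odd. -/
noncomputable def PhiFull {N : ℕ} (A : Matrix (Fin N) (Fin N) ℝ) (t : ℝ) : ℝ :=
  (if Even N then 1 else Real.sqrt t) * PhiW A t

/-- Index type of the strictly upper-triangular positions. -/
abbrev PairIdx (N : ℕ) := {p : Fin N × Fin N // p.1 < p.2}

/-- The canonical product of standard Gaussian measures, one for each edge slot. -/
noncomputable def gaussPi (N : ℕ) : Measure (PairIdx N → ℝ) :=
  Measure.pi fun _ => gaussianReal 0 1

/-- The sample `Y_A(ξ)` of the random skew-symmetric matrix `Y_A`. -/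
noncomputable def sampleY {N : ℕ} (A : Matrix (Fin N) (Fin N) ℝ)
    (ξ : PairIdx N → ℝ) : Matrix (Fin N) (Fin N) ℝ :=
  Matrix.of fun i j =>
    if h : i < j then A i j * ξ ⟨(i, j), h⟩
    else if h : j < i then A i j * ξ ⟨(j, i), h⟩
    else 0

/-- `log Φ̃(t, A) = E log det(√t I_N + Y_A)` for i.i.d. standard Gaussian entries. -/
noncomputable def logPhiTilde {N : ℕ} (t : ℝ) (A : Matrix (Fin N) (Fin N) ℝ) : ℝ :=
  ∫ ξ, Real.log ((Real.sqrt t • (1 : Matrix (Fin N) (Fin N) ℝ) + sampleY A ξ).det) ∂(gaussPi N)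

/-- The constant `C₁ = -(1/√(2π)) ∫ log(x²) e^{-x²/2} dx`. -/
noncomputable def C1 : ℝ :=
  -(Real.sqrt (2 * Real.pi))⁻¹ * ∫ x : ℝ, Real.log (x ^ 2) * Real.exp (-x ^ 2 / 2)

open scoped ENNReal NNReal Pointwise

/-! ### The Prékopa–Leindler inequality -/

lemma volume_add_volume_le_volume_add_of_isCompact {A B : Set ℝ} (hA : IsCompact A)
    (hB : IsCompact B) (hA' : A.Nonempty) (hB' : B.Nonempty) :
    volume A + volume B ≤ volume (A + B) := by
  have hdisj : AEDisjoint volume (A + {sInf B}) ({sSup A} + B) := by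
    refine measure_mono_null (t := {sSup A + sInf B}) ?_ (by simp)
    rintro _ ⟨⟨x, hx, _, rfl, rfl⟩, ⟨_, rfl, y, hy, hxy⟩⟩
    have hxA : x ≤ sSup A := le_csSup hA.bddAbove hx
    have hyB : sInf B ≤ y := csInf_le hB.bddBelow hy
    simp only [Set.mem_singleton_iff] at hxy ⊢
    linarith
  calc volume A + volume B = volume (A + {sInf B}) + volume ({sSup A} + B) := by simp
    _ = volume ((A + {sInf B}) ∪ ({sSup A} + B)) :=
        (measure_union₀ ((isCompact_singleton.add hB).measurableSet.nullMeasurableSet) hdisj).symm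
    _ ≤ volume (A + B) := measure_mono <| Set.union_subset
        (Set.add_subset_add_left (Set.singleton_subset_iff.2 (hB.sInf_mem hB')))
        (Set.add_subset_add_right (Set.singleton_subset_iff.2 (hA.sSup_mem hA')))

theorem volume_add_volume_le_volume_add {A B : Set ℝ} (hA : MeasurableSet A)
    (hB : MeasurableSet B) (hA' : A.Nonempty) (hB' : B.Nonempty) :
    volume A + volume B ≤ volume (A + B) := by
  obtain ⟨p, hp⟩ := hA'
  obtain ⟨q, hq⟩ := hB'
  rw [hA.measure_eq_iSup_isCompact, hB.measure_eq_iSup_isCompact]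
  simp only [iSup_and']
  refine ENNReal.biSup_add_biSup_le' ⟨∅, by simp⟩ ⟨∅, by simp⟩ ?_
  rintro K ⟨hKA, hK⟩ L ⟨hLB, hL⟩
  calc volume K + volume L ≤ volume (insert p K) + volume (insert q L) := by
        gcongr <;> exact Set.subset_insert _ _
    _ ≤ volume (insert p K + insert q L) :=
        volume_add_volume_le_volume_add_of_isCompact (hK.insert p) (hL.insert q)
          (Set.insert_nonempty _ _) (Set.insert_nonempty _ _)
    _ ≤ volume (A + B) := measure_mono <|
        Set.add_subset_add (Set.insert_subset hp hKA) (Set.insert_subset hq hLB)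

lemma lintegral_eq_lintegral_meas_ofReal_lt {α : Type*} [MeasurableSpace α] (μ : Measure α)
    {f : α → ℝ≥0∞} (hf : AEMeasurable f μ) (hf' : ∀ x, f x ≠ ∞) :
    ∫⁻ x, f x ∂μ = ∫⁻ τ in Set.Ioi (0 : ℝ), μ {x | ENNReal.ofReal τ < f x} := by
  have h := lintegral_eq_lintegral_meas_lt μ (.of_forall fun x => ENNReal.toReal_nonneg (a := f x))
    hf.ennreal_toReal
  simp only [ENNReal.ofReal_toReal (hf' _)] at h
  rw [h]
  refine setLIntegral_congr_fun measurableSet_Ioi fun τ hτ => ?_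
  simp only [ENNReal.ofReal_lt_iff_lt_toReal (le_of_lt hτ) (hf' _)]

lemma add_mul_volume_le {s t : ℝ≥0} (hs : s ≠ 0) (ht : t ≠ 0) {A B C : Set ℝ}
    (hA : MeasurableSet A) (hB : MeasurableSet B) (hA' : A.Nonempty) (hB' : B.Nonempty)
    (hC : ∀ x ∈ A, ∀ y ∈ B, s * x + t * y ∈ C) :
    s * volume A + t * volume B ≤ volume C := by
  have hsmul (r : ℝ≥0) (S : Set ℝ) : volume ((r : ℝ) • S) = r * volume S := by
    simp [Measure.addHaar_smul]
  rw [← hsmul, ← hsmul]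
  refine (volume_add_volume_le_volume_add (hA.const_smul_of_ne_zero (by simpa))
    (hB.const_smul_of_ne_zero (by simpa)) (hA'.smul_set) (hB'.smul_set)).trans (measure_mono ?_)
  rintro _ ⟨_, ⟨x, hx, rfl⟩, _, ⟨y, hy, rfl⟩, rfl⟩
  exact hC x hx y hy

lemma add_mul_lintegral_le_of_min_le {s t : ℝ≥0} (hs : s ≠ 0) (ht : t ≠ 0) {f g k : ℝ → ℝ≥0∞}
    (hf : Measurable f) (hg : Measurable g) (hk : Measurable k)
    (hf1 : ⨆ x, f x = 1) (hg1 : ⨆ x, g x = 1)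
    (h : ∀ x y, min (f x) (g y) ≤ k (s * x + t * y)) :
    s * (∫⁻ x, f x) + t * (∫⁻ x, g x) ≤ ∫⁻ x, k x := by
  have hanti (φ : ℝ → ℝ≥0∞) : Measurable fun τ : ℝ => volume {x | ENNReal.ofReal τ < φ x} :=
    Antitone.measurable fun τ σ hτσ => measure_mono fun x hx =>
      (ENNReal.ofReal_le_ofReal hτσ).trans_lt hx
  have hf_le (x : ℝ) : f x ≤ 1 := hf1 ▸ le_iSup f x
  have hg_le (x : ℝ) : g x ≤ 1 := hg1 ▸ le_iSup g x
  have htop {φ : ℝ → ℝ≥0∞} (hφ : ∀ x, φ x ≤ 1) (x : ℝ) : φ x ≠ ∞ :=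
    ne_top_of_le_ne_top ENNReal.one_ne_top (hφ x)
  refine le_trans ?_ (lintegral_mono fun x => min_le_left (k x) 1)
  rw [lintegral_eq_lintegral_meas_ofReal_lt _ hf.aemeasurable (htop hf_le),
    lintegral_eq_lintegral_meas_ofReal_lt _ hg.aemeasurable (htop hg_le),
    lintegral_eq_lintegral_meas_ofReal_lt _ (hk.min measurable_const).aemeasurable
      (htop fun x => min_le_right (k x) 1),
    ← lintegral_const_mul _ (hanti f), ← lintegral_const_mul _ (hanti g),
    ← lintegral_add_left ((hanti f).const_mul _)]
  refine lintegral_mono fun τ => ?_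
  rcases lt_or_ge (ENNReal.ofReal τ) 1 with hτ | hτ
  · obtain ⟨p, hp⟩ := lt_iSup_iff.1 (hτ.trans_eq hf1.symm)
    obtain ⟨q, hq⟩ := lt_iSup_iff.1 (hτ.trans_eq hg1.symm)
    exact add_mul_volume_le hs ht (measurableSet_lt measurable_const hf)
      (measurableSet_lt measurable_const hg) ⟨p, hp⟩ ⟨q, hq⟩
      fun x hx y hy => lt_min ((lt_min hx hy).trans_le (h x y)) hτ
  · simp [fun x => ((hf_le x).trans hτ).not_gt, fun x => ((hg_le x).trans hτ).not_gt]

lemma ennreal_geom_mean_le_arith_mean2_weighted {s t : ℝ≥0} (hst : s + t = 1) (x y : ℝ≥0∞) :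
    x ^ (s : ℝ) * y ^ (t : ℝ) ≤ s * x + t * y := by
  rcases eq_or_ne s 0 with rfl | hs
  · simp [show t = 1 by simpa using hst]
  rcases eq_or_ne t 0 with rfl | ht
  · simp [show s = 1 by simpa using hst]
  induction x with
  | top => simp [hs]
  | coe x =>
    induction y with
    | top => simp [ht]
    | coe y =>
      rw [← ENNReal.coe_rpow_of_nonneg _ s.coe_nonneg, ← ENNReal.coe_rpow_of_nonneg _ t.coe_nonneg]
      exact_mod_cast NNReal.geom_mean_le_arith_mean2_weighted s t x y hst

lemma min_le_rpow_mul_rpow {s t : ℝ≥0} (hst : s + t = 1) (x y : ℝ≥0∞) :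
    min x y ≤ x ^ (s : ℝ) * y ^ (t : ℝ) := by
  calc min x y = min x y ^ (s : ℝ) * min x y ^ (t : ℝ) := by
        rw [← ENNReal.rpow_add_of_nonneg _ _ s.coe_nonneg t.coe_nonneg, ← NNReal.coe_add, hst,
          NNReal.coe_one, ENNReal.rpow_one]
    _ ≤ x ^ (s : ℝ) * y ^ (t : ℝ) := by
        gcongr
        exacts [min_le_left x y, min_le_right x y]

lemma prekopa_leindler_of_iSup_ne_top {s t : ℝ≥0} (hs : s ≠ 0) (ht : t ≠ 0) (hst : s + t = 1)
    {u v w : ℝ → ℝ≥0∞} (hu : Measurable u) (hv : Measurable v) (hw : Measurable w)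
    (hu' : ⨆ x, u x ≠ ∞) (hv' : ⨆ x, v x ≠ ∞)
    (h : ∀ x y, u x ^ (s : ℝ) * v y ^ (t : ℝ) ≤ w (s * x + t * y)) :
    (∫⁻ x, u x) ^ (s : ℝ) * (∫⁻ x, v x) ^ (t : ℝ) ≤ ∫⁻ x, w x := by
  set P := ⨆ x, u x with hP
  set Q := ⨆ x, v x with hQ
  rcases eq_or_ne P 0 with hP0 | hP0
  · simp [ENNReal.iSup_eq_zero.1 hP0, pos_iff_ne_zero.2 hs]
  rcases eq_or_ne Q 0 with hQ0 | hQ0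
  · simp [ENNReal.iSup_eq_zero.1 hQ0, pos_iff_ne_zero.2 ht]
  have hPs : P ^ (s : ℝ) ≠ 0 ∧ P ^ (s : ℝ) ≠ ∞ := by simp [hP0, hu']
  have hQt : Q ^ (t : ℝ) ≠ 0 ∧ Q ^ (t : ℝ) ≠ ∞ := by simp [hQ0, hv']
  have hdiv (x y : ℝ≥0∞) : (x / P) ^ (s : ℝ) * (y / Q) ^ (t : ℝ) =
      x ^ (s : ℝ) * y ^ (t : ℝ) / (P ^ (s : ℝ) * Q ^ (t : ℝ)) := by
    rw [ENNReal.div_rpow_of_nonneg _ _ s.coe_nonneg, ENNReal.div_rpow_of_nonneg _ _ t.coe_nonneg,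
      ENNReal.mul_div_mul_comm (.inl hPs.1) (.inl hPs.2)]
  have key := add_mul_lintegral_le_of_min_le hs ht (hu.div_const P) (hv.div_const Q)
    (hw.div_const (P ^ (s : ℝ) * Q ^ (t : ℝ)))
    (by rw [← ENNReal.iSup_div, ← hP, ENNReal.div_self hP0 hu'])
    (by rw [← ENNReal.iSup_div, ← hQ, ENNReal.div_self hQ0 hv'])
    (fun x y => (min_le_rpow_mul_rpow hst _ _).trans
      ((hdiv _ _).trans_le (ENNReal.div_le_div_right (h x y) _)))
  have hgm := (ennreal_geom_mean_le_arith_mean2_weighted hst _ _).trans key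
  simp only [div_eq_mul_inv, lintegral_mul_const _ hu, lintegral_mul_const _ hv,
    lintegral_mul_const _ hw] at hgm
  simp only [← div_eq_mul_inv, hdiv] at hgm
  rwa [ENNReal.div_le_iff (mul_ne_zero hPs.1 hQt.1) (ENNReal.mul_ne_top hPs.2 hQt.2),
    ENNReal.div_mul_cancel (mul_ne_zero hPs.1 hQt.1) (ENNReal.mul_ne_top hPs.2 hQt.2)] at hgm

theorem prekopa_leindler {s t : ℝ≥0} (hs : s ≠ 0) (ht : t ≠ 0) (hst : s + t = 1)
    {u v w : ℝ → ℝ≥0∞} (hu : Measurable u) (hv : Measurable v) (hw : Measurable w)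
    (h : ∀ x y, u x ^ (s : ℝ) * v y ^ (t : ℝ) ≤ w (s * x + t * y)) :
    (∫⁻ x, u x) ^ (s : ℝ) * (∫⁻ x, v x) ^ (t : ℝ) ≤ ∫⁻ x, w x := by
  have hbdd (φ : ℝ → ℝ≥0∞) (n : ℕ) : ⨆ x, min (φ x) n ≠ ∞ :=
    ne_top_of_le_ne_top (ENNReal.natCast_ne_top n) (iSup_le fun x => min_le_right _ _)
  have hlim {φ : ℝ → ℝ≥0∞} (hφ : Measurable φ) :
      Filter.Tendsto (fun n : ℕ => ∫⁻ x, min (φ x) n) Filter.atTop (nhds (∫⁻ x, φ x)) := by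
    refine lintegral_tendsto_of_tendsto_of_monotone
      (fun n => (hφ.min measurable_const).aemeasurable)
      (.of_forall fun x m n hmn => min_le_min_left _ (Nat.cast_le.2 hmn))
      (.of_forall fun x => ?_)
    simpa using tendsto_const_nhds.min ENNReal.tendsto_nat_nhds_top
  rcases eq_or_ne (∫⁻ x, u x) 0 with hu0 | hu0
  · simp [hu0, pos_iff_ne_zero.2 hs]
  rcases eq_or_ne (∫⁻ x, v x) 0 with hv0 | hv0
  · simp [hv0, pos_iff_ne_zero.2 ht]
  refine le_of_tendsto' (ENNReal.Tendsto.mul ((hlim hu).ennrpow_const _) (.inl (by simp [hu0]))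
    ((hlim hv).ennrpow_const _) (.inl (by simp [hv0]))) fun n => ?_
  refine prekopa_leindler_of_iSup_ne_top hs ht hst (hu.min measurable_const)
    (hv.min measurable_const) hw (hbdd u n) (hbdd v n) fun x y => le_trans ?_ (h x y)
  gcongr <;> exact min_le_left _ _

/-! ### Property (τ) -/

/-- Maurey's property (τ) of a measure `μ` with respect to a cost `c`, in its symmetric form for
two functions: `F x * G y ≤ K * exp (c x y)` everywhere implies `∫ F * ∫ G ≤ K`. -/
def HasPropertyTau {X : Type*} [MeasurableSpace X] (μ : Measure X) (c : X → X → ℝ) : Prop :=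
  ∀ ⦃F G : X → ℝ≥0∞⦄, Measurable F → Measurable G → ∀ ⦃K : ℝ≥0∞⦄,
    (∀ x y, F x * G y ≤ K * ENNReal.ofReal (Real.exp (c x y))) →
      (∫⁻ x, F x ∂μ) * (∫⁻ y, G y ∂μ) ≤ K

lemma gaussianPDF_mul_gaussianPDF_mul_exp (m : ℝ) (v : ℝ≥0) (x y : ℝ) :
    gaussianPDF m v x * gaussianPDF m v y * ENNReal.ofReal (Real.exp ((x - y) ^ 2 / (4 * v))) =
      gaussianPDF m v ((x + y) / 2) ^ 2 := by
  have h : -(x - m) ^ 2 / (2 * v) + -(y - m) ^ 2 / (2 * v) + (x - y) ^ 2 / (4 * v) =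
      -((x + y) / 2 - m) ^ 2 / (2 * v) + -((x + y) / 2 - m) ^ 2 / (2 * v) := by
    ring
  simp only [gaussianPDF]
  rw [← ENNReal.ofReal_mul (gaussianPDFReal_nonneg m v x), ← ENNReal.ofReal_mul (mul_nonneg
    (gaussianPDFReal_nonneg m v x) (gaussianPDFReal_nonneg m v y)),
    ← ENNReal.ofReal_pow (gaussianPDFReal_nonneg m v _)]
  simp only [gaussianPDFReal, sq (_ * Real.exp _), mul_mul_mul_comm _ (Real.exp _)]
  rw [mul_assoc _ _ (Real.exp _), ← Real.exp_add, ← Real.exp_add, ← Real.exp_add, h]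

theorem hasPropertyTau_gaussianReal (m : ℝ) {v : ℝ≥0} (hv : v ≠ 0) :
    HasPropertyTau (gaussianReal m v) fun x y => (x - y) ^ 2 / (4 * v) := by
  intro F G hF hG K h
  have hφ := measurable_gaussianPDF m v
  have hmid : (2⁻¹ : ℝ≥0) + 2⁻¹ = 1 := by norm_num
  have hPL := prekopa_leindler (w := fun x => K ^ (2⁻¹ : ℝ) * gaussianPDF m v x)
    (by norm_num) (by norm_num) hmid (hφ.mul hF) (hφ.mul hG) (hφ.const_mul _) fun x y => ?_
  · rw [lintegral_const_mul _ hφ, lintegral_gaussianPDF_eq_one m hv, mul_one] at hPL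
    rw [gaussianReal_of_var_ne_zero m hv, lintegral_withDensity_eq_lintegral_mul _ hφ hF,
      lintegral_withDensity_eq_lintegral_mul _ hφ hG]
    rwa [NNReal.coe_inv, NNReal.coe_ofNat, ← ENNReal.mul_rpow_of_nonneg _ _ (by norm_num),
      ENNReal.rpow_le_rpow_iff (by norm_num)] at hPL
  · simp only [Pi.mul_apply, NNReal.coe_inv, NNReal.coe_ofNat]
    rw [← ENNReal.mul_rpow_of_nonneg _ _ (by norm_num), ENNReal.rpow_inv_le_iff (by norm_num),
      ENNReal.mul_rpow_of_nonneg _ _ (by norm_num), ENNReal.rpow_inv_rpow (by norm_num)]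
    calc gaussianPDF m v x * F x * (gaussianPDF m v y * G y)
        = gaussianPDF m v x * gaussianPDF m v y * (F x * G y) := by ring
      _ ≤ gaussianPDF m v x * gaussianPDF m v y *
          (K * ENNReal.ofReal (Real.exp ((x - y) ^ 2 / (4 * v)))) :=
          mul_le_mul_right (h x y) _
      _ = K * gaussianPDF m v ((x + y) / 2) ^ 2 := by
          rw [← gaussianPDF_mul_gaussianPDF_mul_exp]; ring
      _ = K * gaussianPDF m v (2⁻¹ * x + 2⁻¹ * y) ^ (2 : ℝ) := by
          rw [ENNReal.rpow_two, ← mul_add, ← div_eq_inv_mul]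

lemma exp_integral_le {X : Type*} [MeasurableSpace X] {μ : Measure X} [IsProbabilityMeasure μ]
    {f : X → ℝ} (hf : Integrable f μ) (hexp : Integrable (fun x => Real.exp (f x)) μ) :
    Real.exp (∫ x, f x ∂μ) ≤ ∫ x, Real.exp (f x) ∂μ :=
  convexOn_exp.map_integral_le Real.continuous_exp.continuousOn isClosed_univ
    (.of_forall fun _ => Set.mem_univ _) hf hexp

namespace HasPropertyTau

variable {X Y : Type*} [MeasurableSpace X] [MeasurableSpace Y] {μ : Measure X} {ν : Measure Y}
  {c : X → X → ℝ} {d : Y → Y → ℝ}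

lemma map (hμ : HasPropertyTau μ c) {T : X → Y} (hT : Measurable T)
    (hdc : ∀ x y, d (T x) (T y) ≤ c x y) : HasPropertyTau (μ.map T) d := by
  intro F G hF hG K h
  rw [lintegral_map hF hT, lintegral_map hG hT]
  refine hμ (hF.comp hT) (hG.comp hT) fun x y => (h (T x) (T y)).trans ?_
  gcongr
  exact hdc x y

lemma prod [SFinite ν] (hμ : HasPropertyTau μ c) (hν : HasPropertyTau ν d) :
    HasPropertyTau (μ.prod ν) fun p q => c p.1 q.1 + d p.2 q.2 := by
  intro F G hF hG K h
  rw [lintegral_prod _ hF.aemeasurable, lintegral_prod _ hG.aemeasurable]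
  refine hμ hF.lintegral_prod_right' hG.lintegral_prod_right' fun x x' => ?_
  refine hν (hF.comp measurable_prodMk_left) (hG.comp measurable_prodMk_left) fun y y' => ?_
  refine (h (x, y) (x', y')).trans_eq ?_
  rw [Real.exp_add, ENNReal.ofReal_mul (Real.exp_nonneg _), mul_assoc]

lemma pi_fin {n : ℕ} {X : Fin n → Type*} [∀ i, MeasurableSpace (X i)]
    {μ : ∀ i, Measure (X i)} [∀ i, SigmaFinite (μ i)] {c : ∀ i, X i → X i → ℝ}
    (h : ∀ i, HasPropertyTau (μ i) (c i)) :
    HasPropertyTau (Measure.pi μ) fun x y => ∑ i, c i (x i) (y i) := by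
  induction n with
  | zero =>
    intro F G _ _ K h
    rw [Measure.pi_of_empty μ default, lintegral_dirac, lintegral_dirac]
    simpa using h default default
  | succ n ih =>
    rw [← ((measurePreserving_piFinSuccAbove μ 0).symm _).map_eq]
    refine ((h 0).prod (ih fun i => h (Fin.succAbove 0 i))).map (MeasurableEquiv.measurable _)
      fun x y => le_of_eq ?_
    rw [Fin.sum_univ_succ]
    rfl

theorem pi {ι : Type*} [Fintype ι] {X : ι → Type*} [∀ i, MeasurableSpace (X i)]
    {μ : ∀ i, Measure (X i)} [∀ i, SigmaFinite (μ i)] {c : ∀ i, X i → X i → ℝ}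
    (h : ∀ i, HasPropertyTau (μ i) (c i)) :
    HasPropertyTau (Measure.pi μ) fun x y => ∑ i, c i (x i) (y i) := by
  let e := (Fintype.equivFin ι).symm
  rw [← (measurePreserving_piCongrLeft μ e).map_eq]
  refine (pi_fin fun i => h (e i)).map (MeasurableEquiv.measurable _) fun x y => le_of_eq ?_
  rw [← e.sum_comp]
  simp [MeasurableEquiv.coe_piCongrLeft]

variable {f : X → ℝ} {K : ℝ}

lemma lintegral_exp_mul_lintegral_exp_neg_le (hμ : HasPropertyTau μ c) (hf : Measurable f)
    (hfc : ∀ x y, f x - f y ≤ K + c x y) :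
    (∫⁻ x, ENNReal.ofReal (Real.exp (f x)) ∂μ) * (∫⁻ x, ENNReal.ofReal (Real.exp (-f x)) ∂μ) ≤
      ENNReal.ofReal (Real.exp K) := by
  refine hμ hf.exp.ennreal_ofReal hf.neg.exp.ennreal_ofReal fun x y => ?_
  rw [← ENNReal.ofReal_mul (Real.exp_nonneg _), ← ENNReal.ofReal_mul (Real.exp_nonneg _),
    ← Real.exp_add, ← Real.exp_add]
  exact ENNReal.ofReal_le_ofReal (Real.exp_le_exp.2 (hfc x y))

lemma integrable_exp_and_integrable_exp_neg [NeZero μ] (hμ : HasPropertyTau μ c)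
    (hf : Measurable f) (hfc : ∀ x y, f x - f y ≤ K + c x y) :
    Integrable (fun x => Real.exp (f x)) μ ∧ Integrable (fun x => Real.exp (-f x)) μ := by
  have hle := hμ.lintegral_exp_mul_lintegral_exp_neg_le hf hfc
  have hne {g : X → ℝ} (hg : Measurable g) : ∫⁻ x, ENNReal.ofReal (Real.exp (g x)) ∂μ ≠ 0 := by
    simp [lintegral_eq_zero_iff hg.exp.ennreal_ofReal, Filter.EventuallyEq, Real.exp_pos,
      NeZero.ne μ]
  have hint {g : X → ℝ} (hg : Measurable g)
      (hfin : ∫⁻ x, ENNReal.ofReal (Real.exp (g x)) ∂μ ≠ ∞) :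
      Integrable (fun x => Real.exp (g x)) μ :=
    (lintegral_ofReal_ne_top_iff_integrable hg.exp.aestronglyMeasurable
      (.of_forall fun x => Real.exp_nonneg _)).1 hfin
  have hlt := hle.trans_lt ENNReal.ofReal_lt_top
  exact ⟨hint hf (ENNReal.lt_top_of_mul_ne_top_left hlt.ne (hne hf.neg)).ne,
    hint hf.neg (ENNReal.lt_top_of_mul_ne_top_right hlt.ne (hne hf)).ne⟩

lemma integral_exp_mul_integral_exp_neg_le [NeZero μ] (hμ : HasPropertyTau μ c)
    (hf : Measurable f) (hfc : ∀ x y, f x - f y ≤ K + c x y) :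
    (∫ x, Real.exp (f x) ∂μ) * (∫ x, Real.exp (-f x) ∂μ) ≤ Real.exp K := by
  obtain ⟨hi, hi'⟩ := hμ.integrable_exp_and_integrable_exp_neg hf hfc
  have hle := hμ.lintegral_exp_mul_lintegral_exp_neg_le hf hfc
  rwa [← ofReal_integral_eq_lintegral_ofReal hi (.of_forall fun x => Real.exp_nonneg _),
    ← ofReal_integral_eq_lintegral_ofReal hi' (.of_forall fun x => Real.exp_nonneg _),
    ← ENNReal.ofReal_mul (integral_nonneg fun x => Real.exp_nonneg _),
    ENNReal.ofReal_le_ofReal_iff (Real.exp_nonneg _)] at hle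

lemma integrable [NeZero μ] (hμ : HasPropertyTau μ c) (hf : Measurable f)
    (hfc : ∀ x y, f x - f y ≤ K + c x y) : Integrable f μ := by
  obtain ⟨hi, hi'⟩ := hμ.integrable_exp_and_integrable_exp_neg hf hfc
  simpa using integrable_pow_of_integrable_exp_mul one_ne_zero (by simpa using hi)
    (by simpa using hi') 1

theorem log_integral_exp_le [IsProbabilityMeasure μ] (hμ : HasPropertyTau μ c)
    (hf : Measurable f) (hfc : ∀ x y, f x - f y ≤ K + c x y) :
    Real.log (∫ x, Real.exp (f x) ∂μ) ≤ (∫ x, f x ∂μ) + K := by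
  obtain ⟨hi, hi'⟩ := hμ.integrable_exp_and_integrable_exp_neg hf hfc
  have hjensen : Real.exp (-∫ x, f x ∂μ) ≤ ∫ x, Real.exp (-f x) ∂μ := by
    rw [← integral_neg]
    exact exp_integral_le (hμ.integrable hf hfc).neg hi'
  rw [Real.log_le_iff_le_exp (integral_exp_pos hi), add_comm, ← neg_neg (∫ x, f x ∂μ),
    ← sub_eq_add_neg, Real.exp_sub, le_div_iff₀ (Real.exp_pos _)]
  exact (mul_le_mul_of_nonneg_left hjensen (integral_exp_pos hi).le).trans
    (hμ.integral_exp_mul_integral_exp_neg_le hf hfc)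

end HasPropertyTau

/-! ### Shifted skew-symmetric matrices -/

section SkewSymmetric

variable {n : Type*} [Fintype n] {s : ℝ} {Y D : Matrix n n ℝ}

lemma dotProduct_mulVec_self_eq_zero (hY : Yᵀ = -Y) (v : n → ℝ) : v ⬝ᵥ Y *ᵥ v = 0 := by
  have h : v ⬝ᵥ Y *ᵥ v = -(v ⬝ᵥ Y *ᵥ v) := by
    calc v ⬝ᵥ Y *ᵥ v = v ⬝ᵥ Yᵀ *ᵥ v := by
          rw [mulVec_transpose, dotProduct_comm v (v ᵥ* Y), dotProduct_mulVec]
      _ = -(v ⬝ᵥ Y *ᵥ v) := by rw [hY, neg_mulVec, dotProduct_neg]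
  linarith

lemma trace_eq_zero_of_transpose_eq_neg (hY : Yᵀ = -Y) : Y.trace = 0 := by
  have h := trace_transpose Y
  rw [hY, trace_neg] at h
  linarith

lemma sq_trace_mul_le (P Q : Matrix n n ℝ) :
    (P * Q).trace ^ 2 ≤ (∑ i, ∑ j, P i j ^ 2) * ∑ i, ∑ j, Q i j ^ 2 := by
  have h := Finset.sum_mul_sq_le_sq_mul_sq (Finset.univ : Finset (n × n))
    (fun p => P p.1 p.2) fun p => Q p.2 p.1
  simp only [Fintype.sum_prod_type] at h
  rwa [Finset.sum_comm (f := fun i j => Q j i ^ 2)] at h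

variable [DecidableEq n]

lemma det_smul_one_add_ne_zero (hs : s ≠ 0) (hY : Yᵀ = -Y) :
    (s • (1 : Matrix n n ℝ) + Y).det ≠ 0 := by
  intro h
  obtain ⟨v, hv, hv0⟩ := exists_mulVec_eq_zero_iff.2 h
  have hsv : s * (v ⬝ᵥ v) = 0 := by
    simpa [add_mulVec, smul_mulVec, dotProduct_mulVec_self_eq_zero hY] using congrArg (v ⬝ᵥ ·) hv0
  exact hv (dotProduct_self_eq_zero.1 ((mul_eq_zero.1 hsv).resolve_left hs))

lemma det_smul_one_add_pos (hs : 0 < s) (hY : Yᵀ = -Y) :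
    0 < (s • (1 : Matrix n n ℝ) + Y).det := by
  have hcont : Continuous fun r : ℝ => (s • (1 : Matrix n n ℝ) + r • Y).det := by fun_prop
  by_contra! hneg
  obtain ⟨r, -, hr⟩ := intermediate_value_Icc' zero_le_one hcont.continuousOn
    (show (0 : ℝ) ∈ Set.Icc _ _ by simp [hneg, hs.le])
  exact det_smul_one_add_ne_zero hs.ne' (by rw [transpose_smul, hY, smul_neg]) hr

/-- The Cayley transform `(s - Y) (s + Y)⁻¹` of a matrix, with a free scale `s`. -/
noncomputable def cayley (s : ℝ) (Y : Matrix n n ℝ) : Matrix n n ℝ :=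
  (s • 1 - Y) * (s • 1 + Y)⁻¹

lemma cayley_eq (hs : s ≠ 0) (hY : Yᵀ = -Y) :
    cayley s Y = (2 * s) • (s • (1 : Matrix n n ℝ) + Y)⁻¹ - 1 := by
  have hM := (det_smul_one_add_ne_zero hs hY).isUnit
  calc cayley s Y = ((2 * s) • 1 - (s • 1 + Y)) * (s • 1 + Y)⁻¹ := by
        rw [cayley]; congr 1; module
    _ = _ := by rw [sub_mul, mul_nonsing_inv _ hM, smul_mul_assoc, one_mul]

lemma transpose_cayley_mul_cayley (hs : s ≠ 0) (hY : Yᵀ = -Y) : (cayley s Y)ᵀ * cayley s Y = 1 := by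
  have hM := (det_smul_one_add_ne_zero hs hY).isUnit
  set M : Matrix n n ℝ := s • 1 + Y with hMdef
  have hMt : Mᵀ = s • 1 - Y := by
    rw [transpose_add, hY, transpose_smul, transpose_one, sub_eq_add_neg]
  have hcomm : M * Mᵀ = Mᵀ * M := by
    rw [hMt, hMdef]
    simp only [add_mul, mul_add, sub_mul, mul_sub, smul_mul_assoc, mul_smul_comm, one_mul, mul_one]
    module
  rw [cayley, ← hMdef, ← hMt]
  calc (Mᵀ * M⁻¹)ᵀ * (Mᵀ * M⁻¹) = M⁻¹ᵀ * (M * Mᵀ) * M⁻¹ := by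
        simp only [transpose_mul, transpose_transpose, Matrix.mul_assoc]
    _ = (M * M⁻¹)ᵀ * (M * M⁻¹) := by
        simp only [hcomm, transpose_mul, Matrix.mul_assoc]
    _ = 1 := by rw [mul_nonsing_inv _ hM, transpose_one, one_mul]

lemma sum_sum_sq_eq_card {Q : Matrix n n ℝ} (hQ : Qᵀ * Q = 1) :
    ∑ i, ∑ j, Q i j ^ 2 = Fintype.card n := by
  rw [← trace_one (n := n) (R := ℝ), ← hQ, Finset.sum_comm]
  simp [trace, mul_apply, sq]

/-- Up to the factor `2 s` the inverse is the orthogonal Cayley transform plus a scalar matrix,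
and the latter is orthogonal to the trace-free `D`. -/
lemma sq_trace_inv_mul_le (hs : s ≠ 0) (hY : Yᵀ = -Y) (hD : Dᵀ = -D) :
    ((s • (1 : Matrix n n ℝ) + Y)⁻¹ * D).trace ^ 2 ≤
      Fintype.card n / (4 * s ^ 2) * ∑ i, ∑ j, D i j ^ 2 := by
  have h : (cayley s Y * D).trace = 2 * s * ((s • (1 : Matrix n n ℝ) + Y)⁻¹ * D).trace := by
    rw [cayley_eq hs hY, sub_mul, one_mul, trace_sub, trace_eq_zero_of_transpose_eq_neg hD,
      sub_zero, smul_mul_assoc, trace_smul, smul_eq_mul]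
  have hcs := sq_trace_mul_le (cayley s Y) D
  rw [sum_sum_sq_eq_card (transpose_cayley_mul_cayley hs hY), h] at hcs
  rw [div_mul_eq_mul_div, le_div_iff₀ (by positivity)]
  linarith

lemma hasDerivAt_det_one_add_smul (D : Matrix n n ℝ) :
    HasDerivAt (fun r : ℝ => (1 + r • D).det) D.trace 0 := by
  have h := (det (1 + (Polynomial.X : Polynomial ℝ) • D.map Polynomial.C)).hasDerivAt 0
  rw [derivative_det_one_add_X_smul] at h
  refine h.congr_of_eventuallyEq (.of_forall fun r => ?_)
  simp only [← Polynomial.coe_evalRingHom, RingHom.map_det]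
  congr 1
  ext i j
  simp [one_apply, apply_ite, mul_comm r]

lemma hasDerivAt_log_det_add_smul (M D : Matrix n n ℝ) {r : ℝ} (h : (M + r • D).det ≠ 0) :
    HasDerivAt (fun x : ℝ => Real.log (M + x • D).det) ((M + r • D)⁻¹ * D).trace r := by
  set P := M + r • D with hP
  have hfactor (x : ℝ) : (M + x • D).det = P.det * (1 + (x - r) • (P⁻¹ * D)).det := by
    rw [← det_mul, mul_add, mul_one, mul_smul_comm, mul_nonsing_inv_cancel_left _ _ h.isUnit, hP]
    congr 1
    module
  have hdet : HasDerivAt (fun x : ℝ => (M + x • D).det) (P.det * (P⁻¹ * D).trace) r := by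
    have h0 := sub_self r ▸ hasDerivAt_det_one_add_smul (P⁻¹ * D)
    simpa only [hfactor] using (h0.comp_sub_const r r).const_mul P.det
  simpa [← hP, h] using hdet.log h

lemma abs_log_det_sub_log_det_le {X : Matrix n n ℝ} (hs : s ≠ 0) (hX : Xᵀ = -X) (hY : Yᵀ = -Y) :
    |Real.log (s • (1 : Matrix n n ℝ) + X).det - Real.log (s • (1 : Matrix n n ℝ) + Y).det| ≤
      √(Fintype.card n / (4 * s ^ 2) * ∑ i, ∑ j, (X - Y) i j ^ 2) := by
  have hD : (X - Y)ᵀ = -(X - Y) := by rw [transpose_sub, hX, hY]; abel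
  have hskew (r : ℝ) : (Y + r • (X - Y))ᵀ = -(Y + r • (X - Y)) := by
    rw [transpose_add, transpose_smul, hY, hD, smul_neg, neg_add]
  have hderiv (r : ℝ) := hasDerivAt_log_det_add_smul (s • (1 : Matrix n n ℝ) + Y) (X - Y) (r := r)
    (by rw [add_assoc]; exact det_smul_one_add_ne_zero hs (hskew r))
  have h := Convex.norm_image_sub_le_of_norm_hasDerivWithin_le
    (fun r _ => (hderiv r).hasDerivWithinAt)
    (fun r _ => Real.abs_le_sqrt
      (by rw [add_assoc]; exact sq_trace_inv_mul_le hs (hskew r) hD))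
    convex_univ (Set.mem_univ (0 : ℝ)) (Set.mem_univ 1)
  simpa using h

end SkewSymmetric

@[to_additive]
lemma prod_prod_eq_prod_diag_mul_prod_lt {ι M : Type*} [Fintype ι] [LinearOrder ι] [CommMonoid M]
    (f : ι → ι → M) :
    ∏ i, ∏ j, f i j =
      (∏ i, f i i) * ∏ p : {p : ι × ι // p.1 < p.2}, f p.1.1 p.1.2 * f p.1.2 p.1.1 := by
  have hlt (g : ι × ι → M) : ∏ p : {p : ι × ι // p.1 < p.2}, g p = ∏ p with p.1 < p.2, g p :=
    (Finset.prod_subtype _ (by simp) g).symm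
  have hdiag : ∏ p : ι × ι with p.1 = p.2, f p.1 p.2 = ∏ i, f i i := by
    rw [Finset.prod_filter, Fintype.prod_prod_type]
    simp
  have hgt : ∏ p : ι × ι with p.2 < p.1, f p.1 p.2 = ∏ p : ι × ι with p.1 < p.2, f p.2 p.1 :=
    Finset.prod_equiv (Equiv.prodComm ι ι) (by simp) (by simp)
  rw [← Fintype.prod_prod_type', ← hdiag, Finset.prod_mul_distrib, hlt fun p => f p.1 p.2,
    hlt fun p => f p.2 p.1, ← hgt, ← Finset.prod_filter_mul_prod_filter_not _ fun p => p.1 = p.2]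
  congr 1
  rw [← Finset.prod_filter_mul_prod_filter_not _ fun p => p.1 < p.2, Finset.filter_filter,
    Finset.filter_filter]
  congr 2 <;> ext p <;> simp <;> grind

/-! ### Matchings and involutions -/

section Matching

/-- A `k`-matching encoded, as in `phiW`, by the set of its pairs `(i, j)` with `i < j`. -/
def IsMatchingSet {ι : Type*} [LT ι] (M : Finset (ι × ι)) : Prop :=
  (∀ p ∈ M, p.1 < p.2) ∧
    ∀ p ∈ M, ∀ q ∈ M, p ≠ q → p.1 ≠ q.1 ∧ p.1 ≠ q.2 ∧ p.2 ≠ q.1 ∧ p.2 ≠ q.2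

variable {ι : Type*} [Fintype ι] [LinearOrder ι]

/-- The matching formed by the pairs that an involution `σ` exchanges. -/
def matchingOf (σ : Equiv.Perm ι) : Finset (ι × ι) :=
  {p | p.1 < p.2 ∧ σ p.1 = p.2}

variable {σ τ : Equiv.Perm ι}

lemma mk_mem_matchingOf {i j : ι} : (i, j) ∈ matchingOf σ ↔ i < j ∧ σ i = j := by
  simp [matchingOf]

lemma isMatchingSet_matchingOf (hσ : Function.Involutive σ) : IsMatchingSet (matchingOf σ) := by
  refine ⟨fun p hp => (mk_mem_matchingOf.1 hp).1, ?_⟩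
  rintro ⟨i, j⟩ hp ⟨k, l⟩ hq hne
  obtain ⟨hij, rfl⟩ := mk_mem_matchingOf.1 hp
  obtain ⟨hkl, rfl⟩ := mk_mem_matchingOf.1 hq
  have hik : i ≠ k := by rintro rfl; exact hne rfl
  have hiσ : σ (σ i) = i := hσ i
  have hkσ : σ (σ k) = k := hσ k
  grind

lemma matchingOf_injOn : {σ : Equiv.Perm ι | Function.Involutive σ}.InjOn matchingOf := by
  intro σ hσ τ hτ h
  have hmoved {σ τ : Equiv.Perm ι} (hσ : Function.Involutive σ) (hτ : Function.Involutive τ)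
      (h : matchingOf σ = matchingOf τ) {i : ι} (hi : σ i ≠ i) : τ i = σ i := by
    rcases hi.lt_or_gt with hlt | hlt
    · have hmem := h ▸ mk_mem_matchingOf.2 ⟨hlt, hσ i⟩
      exact (hτ.eq_iff.1 (mk_mem_matchingOf.1 hmem).2).symm
    · have hmem := h ▸ mk_mem_matchingOf.2 ⟨hlt, rfl⟩
      exact (mk_mem_matchingOf.1 hmem).2
  ext1 i
  by_cases hσi : σ i = i
  · by_contra hne
    exact hne (hmoved hτ hσ h.symm (by rwa [hσi, eq_comm] at hne))
  · exact (hmoved hσ hτ h hσi).symm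

lemma exists_involutive_perm_of_rel {α : Type*} {R : α → α → Prop}
    (hsymm : ∀ ⦃i j⦄, R i j → R j i) (hfun : ∀ ⦃i j k⦄, R i j → R i k → j = k) :
    ∃ σ : Equiv.Perm α, Function.Involutive σ ∧
      (∀ ⦃i j⦄, R i j → σ i = j) ∧ ∀ i, σ i ≠ i → R i (σ i) := by
  classical
  let f : α → α := fun i => if h : ∃ j, R i j then h.choose else i
  have hf {i j : α} (h : R i j) : f i = j := by
    have hex : ∃ j, R i j := ⟨j, h⟩
    simpa [f, hex] using hfun hex.choose_spec h
  have hf' (i : α) (hi : f i ≠ i) : R i (f i) := by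
    by_cases hex : ∃ j, R i j
    · simpa [f, hex] using hex.choose_spec
    · simp [f, hex] at hi
  have hinv : Function.Involutive f := fun i => by
    by_cases hi : f i = i
    · rw [hi, hi]
    · exact hf (hsymm (hf' i hi))
  exact ⟨hinv.toPerm f, hinv, fun i j h => hf h, hf'⟩

lemma exists_matchingOf_eq {M : Finset (ι × ι)} (hM : IsMatchingSet M) :
    ∃ σ : Equiv.Perm ι, Function.Involutive σ ∧ matchingOf σ = M := by
  obtain ⟨hlt, hdisj⟩ := hM
  obtain ⟨σ, hσ, hRσ, hσR⟩ := exists_involutive_perm_of_rel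
    (R := fun i j => (i, j) ∈ M ∨ (j, i) ∈ M) (fun i j h => h.symm) (by grind)
  refine ⟨σ, hσ, ?_⟩
  ext ⟨i, j⟩
  rw [mk_mem_matchingOf]
  constructor
  · rintro ⟨hij, rfl⟩
    exact (hσR i hij.ne').resolve_right fun h => hij.asymm (hlt _ h)
  · exact fun h => ⟨hlt _ h, hRσ (.inl h)⟩

@[to_additive]
lemma prod_matchingOf {M : Type*} [CommMonoid M] (σ : Equiv.Perm ι) (f : ι × ι → M) :
    ∏ p ∈ matchingOf σ, f p =
      ∏ p : {p : ι × ι // p.1 < p.2}, if σ p.1.1 = p.1.2 then f p else 1 := by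
  rw [matchingOf, ← Finset.filter_filter, Finset.prod_filter,
    Finset.prod_subtype (p := fun p : ι × ι => p.1 < p.2) _ (by simp)]

lemma card_fixed_add_two_mul_card_matchingOf (hσ : Function.Involutive σ) :
    (Finset.univ.filter fun i => σ i = i).card + 2 * (matchingOf σ).card = Fintype.card ι := by
  have hcount := sum_sum_eq_sum_diag_add_sum_lt fun i j : ι => if σ i = j then 1 else 0
  have hswap (p : {p : ι × ι // p.1 < p.2}) : σ p.1.2 = p.1.1 ↔ σ p.1.1 = p.1.2 := by
    rw [hσ.eq_iff, eq_comm]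
  simp only [Finset.sum_ite_eq, Finset.mem_univ, if_true, hswap, ← two_mul, ← Finset.mul_sum]
    at hcount
  rw [Finset.card_filter, Finset.card_eq_sum_ones (matchingOf σ), sum_matchingOf, ← hcount,
    Finset.sum_const, Finset.card_univ, smul_eq_mul, mul_one]

lemma sign_eq_neg_one_pow_card_matchingOf (hσ : Function.Involutive σ) :
    Equiv.Perm.sign σ = (-1) ^ (matchingOf σ).card := by
  have hcard := card_fixed_add_two_mul_card_matchingOf hσ
  have hfix : Fintype.card (Function.fixedPoints σ) =
      (Finset.univ.filter fun i => σ i = i).card := Fintype.card_subtype _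
  rw [Equiv.Perm.sign_of_pow_two_eq_one (σ := σ) (by ext1 i; simp [sq, hσ i]), hfix, ← hcard]
  simp

lemma card_le_of_isMatchingSet {M : Finset (ι × ι)} (hM : IsMatchingSet M) :
    2 * M.card ≤ Fintype.card ι := by
  obtain ⟨σ, hσ, rfl⟩ := exists_matchingOf_eq hM
  have := card_fixed_add_two_mul_card_matchingOf hσ
  omega

open Classical in
lemma sum_involutive_eq_sum_isMatchingSet {R : Type*} [AddCommMonoid R] (f : Finset (ι × ι) → R) :
    ∑ σ ∈ {σ : Equiv.Perm ι | Function.Involutive σ}, f (matchingOf σ) =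
      ∑ M : Finset (ι × ι) with IsMatchingSet M, f M := by
  refine Finset.sum_bij (fun σ _ => matchingOf σ) ?_ ?_ ?_ fun _ _ => rfl
  · simpa using fun σ => isMatchingSet_matchingOf
  · simpa using fun σ hσ τ hτ h => matchingOf_injOn hσ hτ h
  · simpa using fun M hM => exists_matchingOf_eq hM

end Matching

/-! ### The random matrix -/

section Sample

variable {N : ℕ} {A : Matrix (Fin N) (Fin N) ℝ} {a t : ℝ} {ξ : PairIdx N → ℝ}

lemma sampleY_of_lt {i j : Fin N} (h : i < j) : sampleY A ξ i j = A i j * ξ ⟨(i, j), h⟩ := by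
  simp [sampleY, h]

lemma sampleY_of_gt {i j : Fin N} (h : j < i) : sampleY A ξ i j = A i j * ξ ⟨(j, i), h⟩ := by
  simp [sampleY, h, h.not_gt]

lemma sampleY_self (i : Fin N) : sampleY A ξ i i = 0 := by
  simp [sampleY]

lemma transpose_sampleY (hA : Aᵀ = -A) (ξ : PairIdx N → ℝ) :
    (sampleY A ξ)ᵀ = -sampleY A ξ := by
  have hskew (i j : Fin N) : A j i = -A i j := congrFun₂ hA i j
  ext i j
  rw [transpose_apply, neg_apply]
  rcases lt_trichotomy i j with h | rfl | h
  · rw [sampleY_of_gt h, sampleY_of_lt h, hskew i j, neg_mul]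
  · rw [sampleY_self, neg_zero]
  · rw [sampleY_of_lt h, sampleY_of_gt h, hskew i j, neg_mul]

lemma sampleY_sub (ξ η : PairIdx N → ℝ) : sampleY A (ξ - η) = sampleY A ξ - sampleY A η := by
  ext i j
  simp only [sampleY, of_apply, Matrix.sub_apply, Pi.sub_apply]
  split_ifs <;> ring

lemma continuous_sampleY (A : Matrix (Fin N) (Fin N) ℝ) : Continuous (sampleY A) := by
  refine continuous_matrix fun i j => ?_
  simp only [sampleY, of_apply]
  split_ifs <;> fun_prop

lemma sum_sum_sampleY_sq_le (ha : ∀ i j, |A i j| ≤ a) (ξ : PairIdx N → ℝ) :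
    ∑ i, ∑ j, sampleY A ξ i j ^ 2 ≤ 2 * a ^ 2 * ∑ p, ξ p ^ 2 := by
  have hsq (i j : Fin N) (x : ℝ) : (A i j * x) ^ 2 ≤ a ^ 2 * x ^ 2 := by
    rw [mul_pow]
    gcongr ?_ * _
    exact sq_le_sq' (neg_le_of_abs_le (ha i j)) (le_of_abs_le (ha i j))
  rw [sum_sum_eq_sum_diag_add_sum_lt, Finset.mul_sum]
  simp only [sampleY_self, ne_eq, OfNat.ofNat_ne_zero, not_false_eq_true, zero_pow,
    Finset.sum_const_zero, zero_add]
  refine Finset.sum_le_sum fun p _ => ?_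
  rw [sampleY_of_lt p.2, sampleY_of_gt p.2]
  linarith [hsq p.1.1 p.1.2 (ξ p), hsq p.1.2 p.1.1 (ξ p)]

lemma log_det_add_sampleY_sub_le (hA : Aᵀ = -A) (ha : ∀ i j, |A i j| ≤ a) (ht : 0 < t)
    (ξ η : PairIdx N → ℝ) :
    Real.log (√t • (1 : Matrix (Fin N) (Fin N) ℝ) + sampleY A ξ).det -
        Real.log (√t • (1 : Matrix (Fin N) (Fin N) ℝ) + sampleY A η).det ≤
      a ^ 2 * N / (2 * t) + ∑ p, (ξ p - η p) ^ 2 / 4 := by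
  set S := ∑ p, (ξ p - η p) ^ 2 with hS
  have : 0 ≤ S := by positivity
  have hfrob : ∑ i, ∑ j, (sampleY A ξ - sampleY A η) i j ^ 2 ≤ 2 * a ^ 2 * S := by
    simpa only [sampleY_sub, Pi.sub_apply] using sum_sum_sampleY_sq_le ha (ξ - η)
  rw [← Finset.sum_div, ← hS]
  refine (le_abs_self _).trans <| (abs_log_det_sub_log_det_le (Real.sqrt_pos.2 ht).ne'
    (transpose_sampleY hA ξ) (transpose_sampleY hA η)).trans <|
      Real.sqrt_le_iff.2 ⟨by positivity, ?_⟩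
  rw [Fintype.card_fin, Real.sq_sqrt ht.le]
  calc N / (4 * t) * ∑ i, ∑ j, (sampleY A ξ - sampleY A η) i j ^ 2
      ≤ N / (4 * t) * (2 * a ^ 2 * S) := by gcongr
    _ = 4 * (a ^ 2 * N / (2 * t)) * (S / 4) := by field_simp; ring
    _ ≤ (a ^ 2 * N / (2 * t) + S / 4) ^ 2 := four_mul_le_sq_add _ _

end Sample

/-! ### The expected determinant -/

section Expectation

lemma prod_apply_perm_eq {ι M : Type*} [Fintype ι] [LinearOrder ι] [CommMonoid M]
    (σ : Equiv.Perm ι) (f : Matrix ι ι M) :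
    ∏ j, f (σ j) j = (∏ i, if σ i = i then f i i else 1) *
      ∏ p : {p : ι × ι // p.1 < p.2}, (if σ p.1.2 = p.1.1 then f p.1.1 p.1.2 else 1) *
        (if σ p.1.1 = p.1.2 then f p.1.2 p.1.1 else 1) := by
  rw [← prod_prod_eq_prod_diag_mul_prod_lt fun i j => if σ j = i then f i j else 1,
    Finset.prod_comm]
  simp

variable {N : ℕ} {A : Matrix (Fin N) (Fin N) ℝ} {σ : Equiv.Perm (Fin N)} {p : PairIdx N}
  {s t : ℝ}

/-- The part of the product `∏ j, (s • 1 + sampleY A ξ) (σ j) j` in the Leibniz formula that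
involves the variable `x = ξ p`. -/
def pairFactor (A : Matrix (Fin N) (Fin N) ℝ) (σ : Equiv.Perm (Fin N)) (p : PairIdx N) (x : ℝ) :
    ℝ :=
  (if σ p.1.2 = p.1.1 then A p.1.1 p.1.2 * x else 1) *
    (if σ p.1.1 = p.1.2 then A p.1.2 p.1.1 * x else 1)

lemma prod_smul_one_add_sampleY_apply (ξ : PairIdx N → ℝ) :
    ∏ j, (s • (1 : Matrix (Fin N) (Fin N) ℝ) + sampleY A ξ) (σ j) j =
      (∏ i, if σ i = i then s else 1) * ∏ p, pairFactor A σ p (ξ p) := by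
  rw [prod_apply_perm_eq]
  congr 1
  · simp [sampleY_self]
  · refine Finset.prod_congr rfl fun p _ => ?_
    simp [pairFactor, sampleY_of_lt p.2, sampleY_of_gt p.2, p.2.ne, p.2.ne']

lemma det_smul_one_add_sampleY (ξ : PairIdx N → ℝ) :
    (s • (1 : Matrix (Fin N) (Fin N) ℝ) + sampleY A ξ).det =
      ∑ σ : Equiv.Perm (Fin N), (Equiv.Perm.sign σ : ℝ) *
        ((∏ i, if σ i = i then s else 1) * ∏ p, pairFactor A σ p (ξ p)) := by
  simp only [det_apply', prod_smul_one_add_sampleY_apply]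

variable {ν : Measure ℝ}

lemma integral_pairFactor_of_not_iff (hmean : ∫ x, x ∂ν = 0)
    (h : ¬(σ p.1.2 = p.1.1 ↔ σ p.1.1 = p.1.2)) : ∫ x, pairFactor A σ p x ∂ν = 0 := by
  unfold pairFactor
  split_ifs
  · tauto
  · simp only [mul_one]
    rw [integral_const_mul, hmean, mul_zero]
  · simp only [one_mul]
    rw [integral_const_mul, hmean, mul_zero]
  · tauto

lemma prod_integral_pairFactor_of_not_involutive (hmean : ∫ x, x ∂ν = 0)
    (hσ : ¬Function.Involutive σ) : ∏ p, ∫ x, pairFactor A σ p x ∂ν = 0 := by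
  obtain ⟨i, hi⟩ : ∃ i, σ (σ i) ≠ i := by simpa [Function.Involutive] using hσ
  have hne : i ≠ σ i := fun h => hi (by rw [← h, ← h])
  rcases hne.lt_or_gt with hlt | hlt
  · exact Finset.prod_eq_zero (Finset.mem_univ ⟨(i, σ i), hlt⟩)
      (integral_pairFactor_of_not_iff hmean (by simp [hi]))
  · exact Finset.prod_eq_zero (Finset.mem_univ ⟨(σ i, i), hlt⟩)
      (integral_pairFactor_of_not_iff hmean (by simp [hi]))

variable [IsProbabilityMeasure ν]

lemma integrable_pairFactor (hν : MemLp id 2 ν) : Integrable (pairFactor A σ p) ν := by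
  have hid : Integrable (fun x : ℝ => x) ν := hν.integrable one_le_two
  unfold pairFactor
  split_ifs
  · refine (hν.integrable_sq.const_mul (A p.1.1 p.1.2 * A p.1.2 p.1.1)).congr
      (ae_of_all _ fun x => ?_)
    simp only [id]
    ring
  · simpa using hid.const_mul _
  · simpa using hid.const_mul _
  · simp

lemma integral_pairFactor_of_iff (hvar : ∫ x, x ^ 2 ∂ν = 1)
    (h : σ p.1.2 = p.1.1 ↔ σ p.1.1 = p.1.2) :
    ∫ x, pairFactor A σ p x ∂ν = if σ p.1.1 = p.1.2 then A p.1.1 p.1.2 * A p.1.2 p.1.1 else 1 := by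
  simp only [pairFactor, h]
  split_ifs
  · have hsq (x : ℝ) : A p.1.1 p.1.2 * x * (A p.1.2 p.1.1 * x) =
        A p.1.1 p.1.2 * A p.1.2 p.1.1 * x ^ 2 := by ring
    simp only [hsq]
    rw [integral_const_mul, hvar, mul_one]
  · simp

lemma integrable_prod_pairFactor (hν : MemLp id 2 ν) (c : ℝ) :
    Integrable (fun ξ : PairIdx N → ℝ => (Equiv.Perm.sign σ : ℝ) *
      (c * ∏ p, pairFactor A σ p (ξ p))) (Measure.pi fun _ => ν) :=
  ((Integrable.fintype_prod fun _ => integrable_pairFactor hν).const_mul _).const_mul _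

lemma integrable_det_smul_one_add_sampleY (hν : MemLp id 2 ν) :
    Integrable (fun ξ => (s • (1 : Matrix (Fin N) (Fin N) ℝ) + sampleY A ξ).det)
      (Measure.pi fun _ => ν) := by
  simp only [det_smul_one_add_sampleY]
  exact integrable_finsetSum _ fun σ _ => integrable_prod_pairFactor hν _

lemma sign_mul_prod_integral_pairFactor_of_involutive (hvar : ∫ x, x ^ 2 ∂ν = 1)
    (hσ : Function.Involutive σ) :
    (Equiv.Perm.sign σ : ℝ) *
        ((∏ i, if σ i = i then s else 1) * ∏ p, ∫ x, pairFactor A σ p x ∂ν) =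
      s ^ (N - 2 * (matchingOf σ).card) * ∏ p ∈ matchingOf σ, -(A p.1 p.2 * A p.2 p.1) := by
  have hcard := card_fixed_add_two_mul_card_matchingOf hσ
  rw [Fintype.card_fin] at hcard
  have hfixed : ∏ i, (if σ i = i then s else 1) = s ^ (N - 2 * (matchingOf σ).card) := by
    rw [← Finset.prod_filter, Finset.prod_const, ← Nat.eq_sub_of_add_eq hcard]
  have hpairs : ∏ p, ∫ x, pairFactor A σ p x ∂ν = ∏ p ∈ matchingOf σ, A p.1 p.2 * A p.2 p.1 := by
    rw [prod_matchingOf]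
    exact Finset.prod_congr rfl fun p _ =>
      integral_pairFactor_of_iff hvar (by rw [hσ.eq_iff, eq_comm])
  rw [hfixed, hpairs, Finset.prod_neg, sign_eq_neg_one_pow_card_matchingOf hσ]
  push_cast
  ring

open Classical in
lemma integral_det_smul_one_add_sampleY (hν : MemLp id 2 ν) (hmean : ∫ x, x ∂ν = 0)
    (hvar : ∫ x, x ^ 2 ∂ν = 1) :
    ∫ ξ, (s • (1 : Matrix (Fin N) (Fin N) ℝ) + sampleY A ξ).det ∂Measure.pi (fun _ => ν) =
      ∑ M : Finset (Fin N × Fin N) with IsMatchingSet M,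
        s ^ (N - 2 * M.card) * ∏ p ∈ M, -(A p.1 p.2 * A p.2 p.1) := by
  simp only [det_smul_one_add_sampleY]
  rw [integral_finsetSum _ fun σ _ => integrable_prod_pairFactor hν _]
  simp only [integral_const_mul, integral_fintype_prod_eq_prod]
  rw [← sum_involutive_eq_sum_isMatchingSet fun M =>
    s ^ (N - 2 * M.card) * ∏ p ∈ M, -(A p.1 p.2 * A p.2 p.1), Finset.sum_filter]
  refine Finset.sum_congr rfl fun σ _ => ?_
  split_ifs with hσ
  · exact sign_mul_prod_integral_pairFactor_of_involutive hvar hσ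
  · rw [prod_integral_pairFactor_of_not_involutive hmean hσ, mul_zero, mul_zero]

lemma sqrt_pow_sub_two_mul (ht : 0 ≤ t) {k : ℕ} (hk : 2 * k ≤ N) :
    √t ^ (N - 2 * k) = (if Even N then 1 else √t) * t ^ (N / 2 - k) := by
  split_ifs with hN
  · obtain ⟨m, rfl⟩ := hN
    rw [show m + m - 2 * k = 2 * ((m + m) / 2 - k) by omega, pow_mul, Real.sq_sqrt ht, one_mul]
  · obtain ⟨m, rfl⟩ := Nat.not_even_iff_odd.1 hN
    rw [show 2 * m + 1 - 2 * k = 2 * ((2 * m + 1) / 2 - k) + 1 by omega, pow_succ', pow_mul,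
      Real.sq_sqrt ht]

open Classical in
lemma PhiFull_eq_sum_isMatchingSet (ht : 0 ≤ t) :
    PhiFull A t = ∑ M : Finset (Fin N × Fin N) with IsMatchingSet M,
      √t ^ (N - 2 * M.card) * ∏ p ∈ M, A p.1 p.2 ^ 2 := by
  have hcard (M : Finset (Fin N × Fin N)) (hM : IsMatchingSet M) : 2 * M.card ≤ N := by
    simpa using card_le_of_isMatchingSet hM
  rw [← Finset.sum_fiberwise_of_maps_to (t := Finset.range (N / 2 + 1)) (g := Finset.card)
    fun M hM => by
      have := hcard M (Finset.mem_filter.1 hM).2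
      exact Finset.mem_range.2 (by omega),
    PhiFull, PhiW, Finset.mul_sum]
  refine Finset.sum_congr rfl fun k _ => ?_
  rw [phiW, Finset.filter_filter, Finset.sum_mul, Finset.mul_sum]
  refine Finset.sum_congr (by ext; simp [IsMatchingSet]) fun M hM => ?_
  obtain ⟨hmatch, rfl⟩ := (Finset.mem_filter.1 hM).2
  rw [sqrt_pow_sub_two_mul ht (hcard M hmatch)]
  ring

end Expectation

/-! ### Gaussian samples -/

section Gaussian

variable {N : ℕ} {A : Matrix (Fin N) (Fin N) ℝ} {a t : ℝ}

instance : IsProbabilityMeasure (gaussPi N) :=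
  inferInstanceAs (IsProbabilityMeasure (Measure.pi _))

lemma hasPropertyTau_gaussPi (N : ℕ) :
    HasPropertyTau (gaussPi N) fun ξ η => ∑ p, (ξ p - η p) ^ 2 / 4 := by
  simpa [gaussPi] using
    HasPropertyTau.pi fun _ : PairIdx N => hasPropertyTau_gaussianReal 0 one_ne_zero

lemma integral_sq_gaussianReal (v : ℝ≥0) : ∫ x, x ^ 2 ∂gaussianReal 0 v = v := by
  rw [← variance_of_integral_eq_zero (by fun_prop) integral_id_gaussianReal,
    variance_fun_id_gaussianReal]

lemma integral_det_eq_PhiFull (hA : Aᵀ = -A) (ht : 0 ≤ t) :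
    ∫ ξ, (√t • (1 : Matrix (Fin N) (Fin N) ℝ) + sampleY A ξ).det ∂gaussPi N = PhiFull A t := by
  have hskew (i j : Fin N) : A j i = -A i j := congrFun₂ hA i j
  have hweight (i j : Fin N) : -(A i j * A j i) = A i j ^ 2 := by rw [hskew i j]; ring
  rw [gaussPi, integral_det_smul_one_add_sampleY (memLp_id_gaussianReal 2)
    integral_id_gaussianReal (integral_sq_gaussianReal 1), PhiFull_eq_sum_isMatchingSet ht]
  simp only [hweight]

lemma measurable_log_det_add_sampleY (A : Matrix (Fin N) (Fin N) ℝ) (t : ℝ) :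
    Measurable fun ξ => Real.log (√t • (1 : Matrix (Fin N) (Fin N) ℝ) + sampleY A ξ).det :=
  (continuous_const.add (continuous_sampleY A)).matrix_det.measurable.log

lemma exp_log_det_add_sampleY (hA : Aᵀ = -A) (ht : 0 < t) (ξ : PairIdx N → ℝ) :
    Real.exp (Real.log (√t • (1 : Matrix (Fin N) (Fin N) ℝ) + sampleY A ξ).det) =
      (√t • (1 : Matrix (Fin N) (Fin N) ℝ) + sampleY A ξ).det :=
  Real.exp_log (det_smul_one_add_pos (Real.sqrt_pos.2 ht) (transpose_sampleY hA ξ))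

lemma log_PhiFull_eq (hA : Aᵀ = -A) (ht : 0 < t) :
    Real.log (PhiFull A t) = Real.log (∫ ξ, Real.exp (Real.log
      (√t • (1 : Matrix (Fin N) (Fin N) ℝ) + sampleY A ξ).det) ∂gaussPi N) := by
  simp only [exp_log_det_add_sampleY hA ht, integral_det_eq_PhiFull hA ht.le]

theorem logPhiTilde_le_log_PhiFull (hA : Aᵀ = -A) (ht : 0 < t) :
    logPhiTilde t A ≤ Real.log (PhiFull A t) := by
  obtain ⟨a, ha⟩ := (Set.finite_range fun p : Fin N × Fin N => |A p.1 p.2|).bddAbove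
  have hlog := (hasPropertyTau_gaussPi N).integrable (measurable_log_det_add_sampleY A t)
    (log_det_add_sampleY_sub_le hA (fun i j => ha ⟨(i, j), rfl⟩) ht)
  have hdet : Integrable (fun ξ => (√t • (1 : Matrix (Fin N) (Fin N) ℝ) + sampleY A ξ).det)
      (gaussPi N) := integrable_det_smul_one_add_sampleY (memLp_id_gaussianReal 2)
  have hjensen := exp_integral_le hlog (by simpa only [exp_log_det_add_sampleY hA ht] using hdet)
  rw [log_PhiFull_eq hA ht]
  exact (Real.le_log_iff_exp_le ((Real.exp_pos _).trans_le hjensen)).2 hjensen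

theorem log_PhiFull_le_logPhiTilde_add (hA : Aᵀ = -A) (ha : ∀ i j, |A i j| ≤ a) (ht : 0 < t) :
    Real.log (PhiFull A t) ≤ logPhiTilde t A + a ^ 2 * N / (2 * t) := by
  rw [log_PhiFull_eq hA ht]
  exact (hasPropertyTau_gaussPi N).log_integral_exp_le (measurable_log_det_add_sampleY A t)
    (log_det_add_sampleY_sub_le hA ha ht)

end Gaussian

lemma le_log_one_add_mul_exp {x c : ℝ} (hc : 0 ≤ c) (hx : x ≤ c ^ 2) :
    x ≤ Real.log (1 + c * Real.exp x) := by
  have hexp : 0 < Real.exp x := Real.exp_pos x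
  rw [Real.le_log_iff_exp_le (by positivity)]
  rcases le_or_gt 1 c with h1c | hc1
  · nlinarith
  · have hxc : x ≤ c := hx.trans (by nlinarith)
    have hexp_sub : Real.exp x - 1 ≤ x * Real.exp x := by
      have := mul_le_mul_of_nonneg_right (Real.one_sub_le_exp_neg x) hexp.le
      rw [← Real.exp_add, neg_add_cancel, Real.exp_zero] at this
      linarith
    nlinarith [mul_le_mul_of_nonneg_right hxc hexp.le]

lemma div_two_mul_le_sq (N : ℕ) (a : ℝ) {t : ℝ} (ht : 0 < t) :
    a ^ 2 * N / (2 * t) ≤ (√(8 * N) * a / √(Real.pi * t)) ^ 2 := by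
  rw [div_pow, mul_pow, Real.sq_sqrt (by positivity), Real.sq_sqrt (by positivity),
    div_le_div_iff₀ (by positivity) (by positivity)]
  have : 0 ≤ a ^ 2 * N * t := by positivity
  nlinarith [Real.pi_le_four]

/-- Corollary of the concentration estimate:
`(1/N) log Φ̃(t,A) ≤ (1/N) log Φ(t,A)
  ≤ (1/N) log Φ̃(t,A) + (1/N) log(1 + √(8N) a e^{a²N/(2t)}/√(πt))`,
where for `N` odd `Φ(t,A)` is replaced by `√t·Φ(t,A)`. -/
theorem log_matching_polynomial_bounds
    {N : ℕ} (A : Matrix (Fin N) (Fin N) ℝ) (hA : Aᵀ = -A) (hA0 : A ≠ 0)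
    (a : ℝ) (ha : ∀ i j, |A i j| ≤ a) (ha' : ∃ i j, |A i j| = a)
    (t : ℝ) (ht : 0 < t) :
    (1 / (N : ℝ)) * logPhiTilde t A ≤ (1 / (N : ℝ)) * Real.log (PhiFull A t) ∧
      (1 / (N : ℝ)) * Real.log (PhiFull A t) ≤
        (1 / (N : ℝ)) * logPhiTilde t A +
          (1 / (N : ℝ)) * Real.log (1 +
            Real.sqrt (8 * N) * a * Real.exp (a ^ 2 * N / (2 * t)) /
              Real.sqrt (Real.pi * t)) := by
  have ha0 : 0 ≤ a := by
    obtain ⟨i, j, h⟩ := ha'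
    exact h ▸ abs_nonneg _
  have herror : a ^ 2 * N / (2 * t) ≤ Real.log (1 +
      Real.sqrt (8 * N) * a * Real.exp (a ^ 2 * N / (2 * t)) / Real.sqrt (Real.pi * t)) := by
    rw [mul_div_right_comm (Real.sqrt (8 * N) * a)]
    exact le_log_one_add_mul_exp (by positivity) (div_two_mul_le_sq N a ht)
  rw [← mul_add]
  constructor <;> gcongr
  · exact logPhiTilde_le_log_PhiFull hA ht
  · exact (log_PhiFull_le_logPhiTilde_add hA ha ht).trans (by gcongr)
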